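/- arXiv:2210.12869 — 2 statements merged into one kernel-verified Lean document; each statement's English description precedes it below -/
import Mathlib

section
/- (Theorem 4.) Let (P*_{0,N}, P*_{1,N}) be a maximizer of Σ_j min{p_0(z_j), p_1(z_j)} over 𝒫^{η+ε}_{0,N} × 𝒫^{η+ε}_{1,N}, let P_0*, P_1* be their uniform smoothings over the partition cells {A_j}, and let φ* be the likelihood ratio test φ*(x) = 1{p_1*(x) ≥ p_0*(x)}. Then |P_E(φ*; P_0*, P_1*) − γ| ≤ L_0 ε, where γ = (1/2) sup_{P_0 ∈ 𝒫_0^η, P_1 ∈ 𝒫_1^η} (1 − TV(P_0, P_1)) and L_0 is the Lipschitz constant of g(θ) = sup_{P_0 ∈ 𝒫_0^θ, P_1 ∈ 𝒫_1^θ}(1 − TV(P_0, P_1)) on [Δ, η_0]. In particular P_E(φ*; P_0*, P_1*) = (1/2) Σ_j min{p*_{0,N}(z_j), p*_{1,N}(z_j)}. -/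
open MeasureTheory

/-- The total variation distance between two measures:
`TV(P, Q) = sup over measurable sets A of |P(A) − Q(A)|`. -/
noncomputable def tv {Ω : Type*} [MeasurableSpace Ω] (P Q : Measure Ω) : ℝ :=
  ⨆ A : {A : Set Ω // MeasurableSet A}, |(P A.1).toReal - (Q A.1).toReal|

/-- The Bayes error with equal priors of a (randomized) test `φ` under `(P₀, P₁)`. -/
noncomputable def bayesError {Ω : Type*} [MeasurableSpace Ω]
    (φ : Ω → ℝ) (P0 P1 : Measure Ω) : ℝ :=
  (1 / 2) * ∫ x, φ x ∂P0 + (1 / 2) * ∫ x, (1 - φ x) ∂P1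

/-- The moment-constrained uncertainty set (probability measures supported on `X`,
with `k`-th moment within `θ` of the nominal moment). -/
def momentSetE {d : ℕ} (X : Set (EuclideanSpace ℝ (Fin d))) {K : ℕ}
    (ψ : Fin K → EuclideanSpace ℝ (Fin d) → ℝ)
    (Qhat : ProbabilityMeasure (EuclideanSpace ℝ (Fin d))) (θ : ℝ) :
    Set (ProbabilityMeasure (EuclideanSpace ℝ (Fin d))) :=
  {P | (P : Measure (EuclideanSpace ℝ (Fin d))) Xᶜ = 0 ∧
    ∀ k, |∫ x, ψ k x ∂(P : Measure (EuclideanSpace ℝ (Fin d))) -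
      ∫ x, ψ k x ∂(Qhat : Measure (EuclideanSpace ℝ (Fin d)))| ≤ θ}

/-- The worst-case affinity `g(θ) = sup_{P₀ ∈ 𝒫₀^θ, P₁ ∈ 𝒫₁^θ} (1 − TV(P₀, P₁))`. -/
noncomputable def worstAffinity {d : ℕ} (X : Set (EuclideanSpace ℝ (Fin d))) {K : ℕ}
    (ψ : Fin K → EuclideanSpace ℝ (Fin d) → ℝ)
    (Q0 Q1 : ProbabilityMeasure (EuclideanSpace ℝ (Fin d))) (θ : ℝ) : ℝ :=
  sSup {r : ℝ | ∃ P0 ∈ momentSetE X ψ Q0 θ, ∃ P1 ∈ momentSetE X ψ Q1 θ,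
    r = 1 - tv (P0 : Measure (EuclideanSpace ℝ (Fin d)))
      (P1 : Measure (EuclideanSpace ℝ (Fin d)))}

/-- The density of the uniform smoothing over the partition `{A_j}` of a pmf `p` on the
points `{z_j}`: `x ↦ ∑_j p_j 1{x ∈ A_j} / Leb(A_j)`. -/
noncomputable def smoothDensity {d N : ℕ} (A : Fin N → Set (EuclideanSpace ℝ (Fin d)))
    (p : Fin N → ℝ) (x : EuclideanSpace ℝ (Fin d)) : ℝ :=
  ∑ j, p j * Set.indicator (A j) (fun _ => ((volume (A j)).toReal)⁻¹) x

lemma tv_nonneg {Ω : Type*} [MeasurableSpace Ω] (P Q : Measure Ω) : 0 ≤ tv P Q :=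
  Real.iSup_nonneg fun _ => abs_nonneg _

lemma abs_measureReal_sub_le_tv {Ω : Type*} [MeasurableSpace Ω] (P Q : Measure Ω)
    [IsProbabilityMeasure P] [IsProbabilityMeasure Q] {B : Set Ω} (hB : MeasurableSet B) :
    |P.real B - Q.real B| ≤ tv P Q := by
  have hbdd : BddAbove (Set.range fun A : {A : Set Ω // MeasurableSet A} =>
      |(P A.1).toReal - (Q A.1).toReal|) := by
    refine ⟨1, ?_⟩
    rintro _ ⟨A, rfl⟩
    have h1 : P.real A.1 ≤ 1 := measureReal_le_one
    have h2 : Q.real A.1 ≤ 1 := measureReal_le_one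
    have h3 : 0 ≤ P.real A.1 := measureReal_nonneg
    have h4 : 0 ≤ Q.real A.1 := measureReal_nonneg
    change |P.real A.1 - Q.real A.1| ≤ 1
    rw [abs_le]
    constructor <;> linarith
  exact le_ciSup hbdd ⟨B, hB⟩

/-- The discrete measure putting mass `p j` at the point `z j`. -/
noncomputable def discreteMeasure {Ω ι : Type*} [MeasurableSpace Ω] [Fintype ι]
    (z : ι → Ω) (p : ι → ℝ) : Measure Ω :=
  ∑ j, ENNReal.ofReal (p j) • Measure.dirac (z j)

lemma discreteMeasure_apply {Ω ι : Type*} [MeasurableSpace Ω] [Fintype ι]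
    (z : ι → Ω) (p : ι → ℝ) {B : Set Ω} (hB : MeasurableSet B) :
    discreteMeasure z p B = ∑ j, ENNReal.ofReal (p j) * B.indicator 1 (z j) := by
  simp [discreteMeasure, Measure.dirac_apply' _ hB]

lemma isProbabilityMeasure_discreteMeasure {Ω ι : Type*} [MeasurableSpace Ω] [Fintype ι]
    (z : ι → Ω) {p : ι → ℝ} (hp : ∀ j, 0 ≤ p j) (hsum : ∑ j, p j = 1) :
    IsProbabilityMeasure (discreteMeasure z p) := by
  constructor
  rw [discreteMeasure_apply z p MeasurableSet.univ]
  simp [← ENNReal.ofReal_sum_of_nonneg fun j _ => hp j, hsum]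

lemma toReal_discreteMeasure_apply {Ω ι : Type*} [MeasurableSpace Ω] [Fintype ι]
    (z : ι → Ω) {p : ι → ℝ} (hp : ∀ j, 0 ≤ p j) {B : Set Ω} (hB : MeasurableSet B) :
    (discreteMeasure z p B).toReal = ∑ j, p j * B.indicator 1 (z j) := by
  classical
  rw [discreteMeasure_apply z p hB, ENNReal.toReal_sum]
  · refine Finset.sum_congr rfl fun j _ => ?_
    by_cases h : z j ∈ B <;> simp [h, hp j]
  · intro j _
    by_cases h : z j ∈ B <;> simp [h]

lemma integral_discreteMeasure {Ω ι : Type*} [MeasurableSpace Ω] [MeasurableSingletonClass Ω]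
    [Fintype ι] (z : ι → Ω) {p : ι → ℝ} (hp : ∀ j, 0 ≤ p j) (f : Ω → ℝ) :
    ∫ x, f x ∂(discreteMeasure z p) = ∑ j, p j * f (z j) := by
  rw [discreteMeasure, integral_finsetSum_measure]
  · simp [hp]
  · intro j _
    exact (integrable_dirac (by simp)).smul_measure ENNReal.ofReal_ne_top

lemma sum_sub_mul_le_one_sub_sum_min {ι : Type*} [Fintype ι] {p q t : ι → ℝ}
    (hp : ∑ j, p j = 1) (ht0 : ∀ j, 0 ≤ t j) (ht1 : ∀ j, t j ≤ 1) :
    ∑ j, p j * t j - ∑ j, q j * t j ≤ 1 - ∑ j, min (p j) (q j) := by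
  rw [← hp, ← Finset.sum_sub_distrib, ← Finset.sum_sub_distrib]
  refine Finset.sum_le_sum fun j _ => ?_
  rcases le_total (p j) (q j) with h | h
  · rw [min_eq_left h]
    nlinarith [ht0 j]
  · rw [min_eq_right h]
    nlinarith [ht1 j]

lemma tv_discreteMeasure_le {Ω ι : Type*} [MeasurableSpace Ω] [Fintype ι]
    (z : ι → Ω) {p q : ι → ℝ} (hp : ∀ j, 0 ≤ p j) (hq : ∀ j, 0 ≤ q j)
    (hp1 : ∑ j, p j = 1) (hq1 : ∑ j, q j = 1) :
    tv (discreteMeasure z p) (discreteMeasure z q) ≤ 1 - ∑ j, min (p j) (q j) := by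
  have : Nonempty {A : Set Ω // MeasurableSet A} := ⟨⟨∅, MeasurableSet.empty⟩⟩
  refine ciSup_le fun B => ?_
  rw [toReal_discreteMeasure_apply z hp B.2, toReal_discreteMeasure_apply z hq B.2]
  have ht0 : ∀ j, 0 ≤ B.1.indicator (1 : Ω → ℝ) (z j) := fun j =>
    Set.indicator_nonneg (fun _ _ => zero_le_one) _
  have ht1 : ∀ j, B.1.indicator (1 : Ω → ℝ) (z j) ≤ 1 := fun j =>
    Set.indicator_le_self' (fun _ _ => zero_le_one) _
  have hswap : ∑ j, min (q j) (p j) = ∑ j, min (p j) (q j) :=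
    Finset.sum_congr rfl fun j _ => min_comm _ _
  have h1 := sum_sub_mul_le_one_sub_sum_min (q := q) hp1 ht0 ht1
  have h2 := sum_sub_mul_le_one_sub_sum_min (q := p) hq1 ht0 ht1
  rw [abs_sub_le_iff]
  constructor <;> linarith

/-- The affinity of two measures is at most that of their restrictions to a finite partition. -/
lemma one_sub_tv_le_sum_min {Ω ι : Type*} [MeasurableSpace Ω] [Fintype ι]
    (P Q : Measure Ω) [IsProbabilityMeasure P] [IsProbabilityMeasure Q] {A : ι → Set Ω}
    (hmeas : ∀ j, MeasurableSet (A j)) (hdisj : Pairwise (Function.onFun Disjoint A))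
    (hP : ∑ j, P.real (A j) = 1) :
    1 - tv P Q ≤ ∑ j, min (P.real (A j)) (Q.real (A j)) := by
  classical
  set s : Finset ι := Finset.univ.filter fun j => Q.real (A j) < P.real (A j)
  have hB : MeasurableSet (⋃ j ∈ s, A j) := s.measurableSet_biUnion fun j _ => hmeas j
  have hreal : ∀ R : Measure Ω, IsProbabilityMeasure R →
      R.real (⋃ j ∈ s, A j) = ∑ j ∈ s, R.real (A j) := fun R _ =>
    measureReal_biUnion_finset (fun i _ j _ hij => hdisj hij) fun j _ => hmeas j
  have htv := (le_abs_self _).trans (abs_measureReal_sub_le_tv P Q hB)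
  rw [hreal P inferInstance, hreal Q inferInstance, ← Finset.sum_sub_distrib,
    Finset.sum_filter] at htv
  have hsum : ∑ j, (if Q.real (A j) < P.real (A j) then P.real (A j) - Q.real (A j) else 0)
      = ∑ j, P.real (A j) - ∑ j, min (P.real (A j)) (Q.real (A j)) := by
    rw [← Finset.sum_sub_distrib]
    refine Finset.sum_congr rfl fun j _ => ?_
    split_ifs with h
    · rw [min_eq_right h.le]
    · rw [min_eq_left (not_lt.mp h), sub_self]
  linarith

lemma abs_sum_measureReal_mul_sub_integral_le {E ι : Type*} [MeasurableSpace E]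
    [Fintype ι] (P : Measure E) [IsProbabilityMeasure P] {A : ι → Set E} {X : Set E}
    (hmeas : ∀ j, MeasurableSet (A j)) (hdisj : Pairwise (Function.onFun Disjoint A))
    (hcover : ⋃ j, A j = X) (hPX : P Xᶜ = 0) (hP : ∑ j, P.real (A j) = 1)
    {f : E → ℝ} (hf : Integrable f P) (c : ι → ℝ) {ε : ℝ}
    (hc : ∀ j, ∀ x ∈ A j, |f x - c j| ≤ ε) :
    |∑ j, P.real (A j) * c j - ∫ x, f x ∂P| ≤ ε := by
  have hrestrict : P.restrict X = P := Measure.restrict_eq_self_of_ae_mem hPX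
  have hint : ∫ x, f x ∂P = ∑ j, ∫ x in A j, f x ∂P := by
    conv_lhs => rw [← hrestrict, ← hcover]
    exact integral_iUnion_fintype hmeas hdisj fun j => hf.integrableOn
  rw [hint, ← Finset.sum_sub_distrib]
  calc |∑ j, (P.real (A j) * c j - ∫ x in A j, f x ∂P)|
      ≤ ∑ j, |P.real (A j) * c j - ∫ x in A j, f x ∂P| := Finset.abs_sum_le_sum_abs _ _
    _ ≤ ∑ j, ε * P.real (A j) := Finset.sum_le_sum fun j _ => ?_
    _ = ε := by rw [← Finset.mul_sum, hP, mul_one]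
  have hsub : ∫ x in A j, (f x - c j) ∂P = ∫ x in A j, f x ∂P - P.real (A j) * c j := by
    rw [integral_sub hf.integrableOn (integrable_const _).integrableOn, setIntegral_const,
      smul_eq_mul]
  rw [abs_sub_comm, ← hsub]
  exact norm_setIntegral_le_of_norm_le_const (f := fun x => f x - c j) (measure_lt_top _ _) (hc j)

lemma sum_measureReal_eq_one {E ι : Type*} [MeasurableSpace E] [Fintype ι] (P : Measure E)
    [IsProbabilityMeasure P] {A : ι → Set E} {X : Set E} (hmeas : ∀ j, MeasurableSet (A j))
    (hdisj : Pairwise (Function.onFun Disjoint A)) (hcover : ⋃ j, A j = X) (hPX : P Xᶜ = 0) :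
    ∑ j, P.real (A j) = 1 := by
  have hXm : MeasurableSet X := hcover ▸ MeasurableSet.iUnion hmeas
  rw [← measureReal_iUnion_fintype hdisj hmeas, hcover, measureReal_def,
    (prob_compl_eq_zero_iff hXm).mp hPX, ENNReal.toReal_one]

lemma integrable_of_continuous_of_compl_null {E : Type*} [TopologicalSpace E] [T2Space E]
    [MeasurableSpace E] [BorelSpace E] (P : Measure E) [IsFiniteMeasure P]
    {X : Set E} (hX : IsCompact X) (hPX : P Xᶜ = 0) {f : E → ℝ} (hf : Continuous f) :
    Integrable f P := by
  have hrestrict : P.restrict X = P := Measure.restrict_eq_self_of_ae_mem hPX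
  rw [← hrestrict]
  exact hf.continuousOn.integrableOn_compact hX

section Smoothing

variable {d N : ℕ} {A : Fin N → Set (EuclideanSpace ℝ (Fin d))}

lemma smoothDensity_of_mem (hdisj : Pairwise (Function.onFun Disjoint A)) (p : Fin N → ℝ)
    {j : Fin N} {x : EuclideanSpace ℝ (Fin d)} (hx : x ∈ A j) :
    smoothDensity A p x = p j * ((volume (A j)).toReal)⁻¹ := by
  rw [smoothDensity, Finset.sum_eq_single j]
  · rw [Set.indicator_of_mem hx]
  · intro i _ hij
    rw [Set.indicator_of_notMem (Set.disjoint_right.mp (hdisj hij) hx), mul_zero]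
  · simp

lemma smoothDensity_of_notMem (p : Fin N → ℝ) {x : EuclideanSpace ℝ (Fin d)}
    (hx : ∀ j, x ∉ A j) : smoothDensity A p x = 0 :=
  Finset.sum_eq_zero fun j _ => by rw [Set.indicator_of_notMem (hx j), mul_zero]

lemma smoothDensity_nonneg {p : Fin N → ℝ} (hp : ∀ j, 0 ≤ p j)
    (x : EuclideanSpace ℝ (Fin d)) : 0 ≤ smoothDensity A p x :=
  Finset.sum_nonneg fun j _ => mul_nonneg (hp j)
    (Set.indicator_nonneg (fun _ _ => inv_nonneg.mpr ENNReal.toReal_nonneg) _)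

lemma measurable_smoothDensity (hmeas : ∀ j, MeasurableSet (A j)) (p : Fin N → ℝ) :
    Measurable (smoothDensity A p) :=
  Finset.measurable_fun_sum _ fun j _ => (measurable_const.indicator (hmeas j)).const_mul _

lemma smoothDensity_min (hdisj : Pairwise (Function.onFun Disjoint A)) (p q : Fin N → ℝ)
    (x : EuclideanSpace ℝ (Fin d)) :
    smoothDensity A (fun j => min (p j) (q j)) x
      = min (smoothDensity A p x) (smoothDensity A q x) := by
  by_cases hx : ∃ j, x ∈ A j
  · obtain ⟨j, hj⟩ := hx
    simp only [smoothDensity_of_mem hdisj _ hj]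
    exact min_mul_of_nonneg _ _ (inv_nonneg.mpr ENNReal.toReal_nonneg)
  · push Not at hx
    simp only [smoothDensity_of_notMem _ hx, min_self]

lemma integrable_smoothDensity (hmeas : ∀ j, MeasurableSet (A j))
    (hfin : ∀ j, volume (A j) ≠ ⊤) (p : Fin N → ℝ) : Integrable (smoothDensity A p) :=
  integrable_finsetSum _ fun j _ =>
    ((integrable_indicator_iff (hmeas j)).mpr (integrableOn_const (hfin j))).const_mul _

lemma integral_smoothDensity (hmeas : ∀ j, MeasurableSet (A j))
    (hpos : ∀ j, 0 < volume (A j)) (hfin : ∀ j, volume (A j) ≠ ⊤) (p : Fin N → ℝ) :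
    ∫ x, smoothDensity A p x = ∑ j, p j := by
  unfold smoothDensity
  rw [integral_finsetSum]
  · refine Finset.sum_congr rfl fun j _ => ?_
    rw [integral_const_mul, integral_indicator (hmeas j), setIntegral_const, smul_eq_mul,
      measureReal_def, mul_inv_cancel₀ (ENNReal.toReal_pos (hpos j).ne' (hfin j)).ne', mul_one]
  · intro j _
    exact ((integrable_indicator_iff (hmeas j)).mpr (integrableOn_const (hfin j))).const_mul _

lemma integral_withDensity_smoothDensity (hmeas : ∀ j, MeasurableSet (A j)) {p : Fin N → ℝ}
    (hp : ∀ j, 0 ≤ p j) (f : EuclideanSpace ℝ (Fin d) → ℝ) :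
    ∫ x, f x ∂(volume.withDensity fun x => ENNReal.ofReal (smoothDensity A p x))
      = ∫ x, smoothDensity A p x * f x := by
  rw [integral_withDensity_eq_integral_toReal_smul
    (measurable_smoothDensity hmeas p).ennreal_ofReal (by simp)]
  simp only [ENNReal.toReal_ofReal (smoothDensity_nonneg hp _), smul_eq_mul]

/-- The error of the likelihood ratio test between two smoothed densities is half the affinity
of the underlying discrete distributions. -/
lemma bayesError_smoothDensity (hmeas : ∀ j, MeasurableSet (A j))
    (hdisj : Pairwise (Function.onFun Disjoint A)) (hpos : ∀ j, 0 < volume (A j))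
    (hfin : ∀ j, volume (A j) ≠ ⊤) {p q : Fin N → ℝ} (hp : ∀ j, 0 ≤ p j)
    (hq : ∀ j, 0 ≤ q j) :
    bayesError (fun x => if smoothDensity A p x ≤ smoothDensity A q x then (1 : ℝ) else 0)
        (volume.withDensity fun x => ENNReal.ofReal (smoothDensity A p x))
        (volume.withDensity fun x => ENNReal.ofReal (smoothDensity A q x)) =
      (1 / 2) * ∑ j, min (p j) (q j) := by
  have hset : MeasurableSet {x | smoothDensity A p x ≤ smoothDensity A q x} :=
    measurableSet_le (measurable_smoothDensity hmeas p) (measurable_smoothDensity hmeas q)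
  have hφ : Measurable fun x =>
      if smoothDensity A p x ≤ smoothDensity A q x then (1 : ℝ) else 0 :=
    Measurable.ite hset measurable_const measurable_const
  have hi0 : Integrable fun x => smoothDensity A p x *
      (if smoothDensity A p x ≤ smoothDensity A q x then (1 : ℝ) else 0) :=
    (integrable_smoothDensity hmeas hfin p).mul_bdd (c := 1) hφ.aestronglyMeasurable
      (Filter.Eventually.of_forall fun x => by split_ifs <;> simp)
  have hi1 : Integrable fun x => smoothDensity A q x *
      (1 - if smoothDensity A p x ≤ smoothDensity A q x then (1 : ℝ) else 0) :=
    (integrable_smoothDensity hmeas hfin q).mul_bdd (c := 1)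
      (hφ.const_sub 1).aestronglyMeasurable
      (Filter.Eventually.of_forall fun x => by split_ifs <;> simp)
  rw [bayesError, integral_withDensity_smoothDensity hmeas hp,
    integral_withDensity_smoothDensity hmeas hq, ← mul_add, ← integral_add hi0 hi1,
    ← integral_smoothDensity hmeas hpos hfin]
  congr 1
  refine integral_congr_ae (Filter.Eventually.of_forall fun x => ?_)
  simp only [smoothDensity_min hdisj]
  split_ifs with h
  · simp [min_eq_left h]
  · simp [min_eq_right (not_le.mp h).le]

end Smoothing

section WorstAffinity

variable {d : ℕ} {X : Set (EuclideanSpace ℝ (Fin d))} {K : ℕ}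
  {ψ : Fin K → EuclideanSpace ℝ (Fin d) → ℝ}
  {Q0 Q1 : ProbabilityMeasure (EuclideanSpace ℝ (Fin d))}

lemma one_sub_tv_le_worstAffinity {θ : ℝ}
    {P0 P1 : ProbabilityMeasure (EuclideanSpace ℝ (Fin d))}
    (h0 : P0 ∈ momentSetE X ψ Q0 θ) (h1 : P1 ∈ momentSetE X ψ Q1 θ) :
    1 - tv (P0 : Measure (EuclideanSpace ℝ (Fin d))) P1 ≤ worstAffinity X ψ Q0 Q1 θ := by
  refine le_csSup ⟨1, ?_⟩ ⟨P0, h0, P1, h1, rfl⟩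
  rintro _ ⟨R0, _, R1, _, rfl⟩
  exact sub_le_self _ (tv_nonneg _ _)

lemma discreteMeasure_mem_momentSetE {N : ℕ} {Q : ProbabilityMeasure (EuclideanSpace ℝ (Fin d))}
    (hXm : MeasurableSet X) {z : Fin N → EuclideanSpace ℝ (Fin d)} (hzX : ∀ j, z j ∈ X)
    {p : Fin N → ℝ} (hp : ∀ j, 0 ≤ p j) (hsum : ∑ j, p j = 1) {θ : ℝ}
    (hmom : ∀ k, |∑ j, p j * ψ k (z j) -
      ∫ x, ψ k x ∂(Q : Measure (EuclideanSpace ℝ (Fin d)))| ≤ θ) :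
    (⟨discreteMeasure z p, isProbabilityMeasure_discreteMeasure z hp hsum⟩ :
      ProbabilityMeasure (EuclideanSpace ℝ (Fin d))) ∈ momentSetE X ψ Q θ := by
  refine ⟨?_, fun k => ?_⟩
  · change discreteMeasure z p Xᶜ = 0
    rw [discreteMeasure_apply z p hXm.compl]
    simp [hzX]
  · change |∫ x, ψ k x ∂(discreteMeasure z p) - _| ≤ θ
    rw [integral_discreteMeasure z hp]
    exact hmom k

/-- Collapsing the cells of the partition to the net points moves the moments by at most `ε`. -/
lemma cellMass_feasible (hX : IsCompact X) (hψ : ∀ k, Continuous (ψ k))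
    (hLip : ∀ k, ∀ x y : EuclideanSpace ℝ (Fin d), |ψ k x - ψ k y| ≤ ‖x - y‖)
    {N : ℕ} {z : Fin N → EuclideanSpace ℝ (Fin d)} {A : Fin N → Set (EuclideanSpace ℝ (Fin d))}
    (hmeas : ∀ j, MeasurableSet (A j)) (hdisj : Pairwise (Function.onFun Disjoint A))
    (hcover : (⋃ j, A j) = X) {ε θ : ℝ} (hnet : ∀ j, ∀ x ∈ A j, ‖x - z j‖ ≤ ε)
    {Q P : ProbabilityMeasure (EuclideanSpace ℝ (Fin d))} (hP : P ∈ momentSetE X ψ Q θ) :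
    (∀ j, 0 ≤ (P : Measure (EuclideanSpace ℝ (Fin d))).real (A j)) ∧
      ∑ j, (P : Measure (EuclideanSpace ℝ (Fin d))).real (A j) = 1 ∧
      ∀ k, |∑ j, (P : Measure (EuclideanSpace ℝ (Fin d))).real (A j) * ψ k (z j) -
        ∫ x, ψ k x ∂(Q : Measure (EuclideanSpace ℝ (Fin d)))| ≤ θ + ε := by
  have hsum := sum_measureReal_eq_one (P : Measure (EuclideanSpace ℝ (Fin d))) hmeas hdisj
    hcover hP.1
  refine ⟨fun j => measureReal_nonneg, hsum, fun k => ?_⟩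
  have h := abs_sum_measureReal_mul_sub_integral_le (P : Measure (EuclideanSpace ℝ (Fin d)))
    hmeas hdisj hcover hP.1 hsum (integrable_of_continuous_of_compl_null _ hX hP.1 (hψ k))
    (fun j => ψ k (z j)) fun j x hx => (hLip k x (z j)).trans (hnet j x hx)
  refine (abs_sub_le _ (∫ x, ψ k x ∂(P : Measure (EuclideanSpace ℝ (Fin d)))) _).trans ?_
  linarith [hP.2 k]

end WorstAffinity

/-- **Theorem 4.** Let `(p0s, p1s)` maximize `∑_j min{p₀(z_j), p₁(z_j)}`
over the discretized relaxed uncertainty sets, let `P₀*, P₁*` be the uniform smoothings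
of the corresponding discrete distributions over the partition cells, and let `φ*` be
the likelihood ratio test between the smoothed densities. Then
`|P_E(φ*; P₀*, P₁*) − γ| ≤ L₀ ε`, and in particular
`P_E(φ*; P₀*, P₁*) = (1/2) ∑_j min{p0s_j, p1s_j}`. -/
theorem robust_test_optimality_gap
    {d : ℕ} (X : Set (EuclideanSpace ℝ (Fin d))) (hX : IsCompact X)
    {K : ℕ} (hK : 0 < K) (ψ : Fin K → EuclideanSpace ℝ (Fin d) → ℝ)
    (hψ : ∀ k, Continuous (ψ k))
    (hLip : ∀ k, ∀ x y : EuclideanSpace ℝ (Fin d), |ψ k x - ψ k y| ≤ ‖x - y‖)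
    (Q0 Q1 : ProbabilityMeasure (EuclideanSpace ℝ (Fin d)))
    (hQ0X : (Q0 : Measure (EuclideanSpace ℝ (Fin d))) Xᶜ = 0)
    (hQ1X : (Q1 : Measure (EuclideanSpace ℝ (Fin d))) Xᶜ = 0)
    (Δ η0 η ε : ℝ) (hΔ : 0 < Δ) (hΔη0 : Δ < η0)
    (hη : η ∈ Set.Icc Δ η0) (hε : 0 ≤ ε) (hηε : η + ε ≤ η0)
    (hη0max : η0 < ⨆ k : Fin K,
      |∫ x, ψ k x ∂(Q1 : Measure (EuclideanSpace ℝ (Fin d))) -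
        ∫ x, ψ k x ∂(Q0 : Measure (EuclideanSpace ℝ (Fin d)))| / 2)
    -- the ε-net `{z_j}` with its associated measurable partition `{A_j}` of `X`
    {N : ℕ} (z : Fin N → EuclideanSpace ℝ (Fin d)) (hzX : ∀ j, z j ∈ X)
    (A : Fin N → Set (EuclideanSpace ℝ (Fin d)))
    (hmeas : ∀ j, MeasurableSet (A j))
    (hdisj : Pairwise (Function.onFun Disjoint A))
    (hcover : (⋃ j, A j) = X)
    (hnet : ∀ j, ∀ x ∈ A j, ‖x - z j‖ ≤ ε)
    (hvolpos : ∀ j, 0 < volume (A j))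
    -- `(p0s, p1s)` is a maximizer of the discretized relaxed problem
    (p0s p1s : Fin N → ℝ)
    (h0feas : (∀ j, 0 ≤ p0s j) ∧ ∑ j, p0s j = 1 ∧ ∀ k,
      |∑ j, p0s j * ψ k (z j) -
        ∫ x, ψ k x ∂(Q0 : Measure (EuclideanSpace ℝ (Fin d)))| ≤ η + ε)
    (h1feas : (∀ j, 0 ≤ p1s j) ∧ ∑ j, p1s j = 1 ∧ ∀ k,
      |∑ j, p1s j * ψ k (z j) -
        ∫ x, ψ k x ∂(Q1 : Measure (EuclideanSpace ℝ (Fin d)))| ≤ η + ε)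
    (hopt : ∀ p0 p1 : Fin N → ℝ,
      ((∀ j, 0 ≤ p0 j) ∧ ∑ j, p0 j = 1 ∧ ∀ k,
        |∑ j, p0 j * ψ k (z j) -
          ∫ x, ψ k x ∂(Q0 : Measure (EuclideanSpace ℝ (Fin d)))| ≤ η + ε) →
      ((∀ j, 0 ≤ p1 j) ∧ ∑ j, p1 j = 1 ∧ ∀ k,
        |∑ j, p1 j * ψ k (z j) -
          ∫ x, ψ k x ∂(Q1 : Measure (EuclideanSpace ℝ (Fin d)))| ≤ η + ε) →
      ∑ j, min (p0 j) (p1 j) ≤ ∑ j, min (p0s j) (p1s j))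
    -- `L₀` is a Lipschitz constant of the worst-case affinity on `[Δ, η₀]`
    (L0 : ℝ)
    (hL0 : ∀ a ∈ Set.Icc Δ η0, ∀ b ∈ Set.Icc Δ η0,
      |worstAffinity X ψ Q0 Q1 a - worstAffinity X ψ Q0 Q1 b| ≤ L0 * |a - b|) :
    |bayesError
        (fun x => if smoothDensity A p0s x ≤ smoothDensity A p1s x then (1 : ℝ) else 0)
        (volume.withDensity fun x => ENNReal.ofReal (smoothDensity A p0s x))
        (volume.withDensity fun x => ENNReal.ofReal (smoothDensity A p1s x)) -
      (1 / 2) * worstAffinity X ψ Q0 Q1 η| ≤ L0 * ε ∧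
    bayesError
        (fun x => if smoothDensity A p0s x ≤ smoothDensity A p1s x then (1 : ℝ) else 0)
        (volume.withDensity fun x => ENNReal.ofReal (smoothDensity A p0s x))
        (volume.withDensity fun x => ENNReal.ofReal (smoothDensity A p1s x)) =
      (1 / 2) * ∑ j, min (p0s j) (p1s j) := by
  have hXm : MeasurableSet X := hX.isClosed.measurableSet
  have hfin : ∀ j, volume (A j) ≠ ⊤ := fun j =>
    ((measure_mono (hcover ▸ Set.subset_iUnion A j)).trans_lt hX.measure_lt_top).ne
  have herr := bayesError_smoothDensity hmeas hdisj hvolpos hfin h0feas.1 h1feas.1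
  refine ⟨?_, herr⟩
  have hupper : ∑ j, min (p0s j) (p1s j) ≤ worstAffinity X ψ Q0 Q1 (η + ε) := by
    have htv := tv_discreteMeasure_le z h0feas.1 h1feas.1 h0feas.2.1 h1feas.2.1
    have hle := one_sub_tv_le_worstAffinity
      (discreteMeasure_mem_momentSetE hXm hzX h0feas.1 h0feas.2.1 h0feas.2.2)
      (discreteMeasure_mem_momentSetE hXm hzX h1feas.1 h1feas.2.1 h1feas.2.2)
    simp only [ProbabilityMeasure.coe_mk] at hle
    linarith
  have hlower : worstAffinity X ψ Q0 Q1 η ≤ ∑ j, min (p0s j) (p1s j) := by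
    refine Real.sSup_le ?_ (Finset.sum_nonneg fun j _ => le_min (h0feas.1 j) (h1feas.1 j))
    rintro _ ⟨P0, hP0, P1, hP1, rfl⟩
    have hf0 := cellMass_feasible hX hψ hLip hmeas hdisj hcover hnet hP0
    have hf1 := cellMass_feasible hX hψ hLip hmeas hdisj hcover hnet hP1
    exact (one_sub_tv_le_sum_min _ _ hmeas hdisj hf0.2.1).trans (hopt _ _ hf0 hf1)
  have hgap := hL0 (η + ε) ⟨by linarith [hη.1], hηε⟩ η hη
  rw [add_sub_cancel_left, abs_of_nonneg hε] at hgap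
  have hgap' := (le_abs_self _).trans hgap
  rw [herr, abs_le]
  constructor <;> linarith
end

section
/- With matrix-valued moment uncertainty sets 𝒮_i^η = {P ∈ 𝒫 : −η I ⪯ E_P[Ψ_k] − E_{Q̂_i}[Ψ_k] ⪯ η I for all k = 1,…,K}, i = 0,1, both nonempty, the minimax identity holds: inf_φ sup_{P_0 ∈ 𝒮_0^η, P_1 ∈ 𝒮_1^η} P_E(φ; P_0, P_1) = sup_{P_0 ∈ 𝒮_0^η, P_1 ∈ 𝒮_1^η} inf_φ P_E(φ; P_0, P_1), where the infimum is over all measurable tests φ : X → [0,1]. -/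
open MeasureTheory

/-- Entrywise expectation of a matrix-valued function under a measure. -/
noncomputable def matExp {Ω : Type*} [MeasurableSpace Ω] {m : Type*}
    (Ψ : Ω → Matrix m m ℝ) (P : Measure Ω) : Matrix m m ℝ :=
  Matrix.of fun i j => ∫ x, Ψ x i j ∂P

/-- The matrix-moment uncertainty set
`𝒮^η(Q̂) = {P : −η I ⪯ E_P[Ψ_k] − E_{Q̂}[Ψ_k] ⪯ η I, k = 1,…,K}`. -/
def matrixMomentSet {d : ℕ} (X : Set (EuclideanSpace ℝ (Fin d))) {K : ℕ}
    {dk : Fin K → ℕ} (Ψ : ∀ k, X → Matrix (Fin (dk k)) (Fin (dk k)) ℝ)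
    (Qhat : ProbabilityMeasure X) (η : ℝ) : Set (ProbabilityMeasure X) :=
  {P | ∀ k, (matExp (Ψ k) (P : Measure X) - matExp (Ψ k) (Qhat : Measure X) +
      η • (1 : Matrix (Fin (dk k)) (Fin (dk k)) ℝ)).PosSemidef ∧
    (η • (1 : Matrix (Fin (dk k)) (Fin (dk k)) ℝ) -
      (matExp (Ψ k) (P : Measure X) - matExp (Ψ k) (Qhat : Measure X))).PosSemidef}

/-- If finitely-mixable payoffs on a compact set are, at each point, beaten by some strategy below
the level `c`, then a single finite mixture of strategies stays below `c` everywhere. -/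
theorem exists_finite_mixture_lt {T ι : Type*} [TopologicalSpace T] {S : Set T}
    (hS : IsCompact S) (hne : S.Nonempty) {f : ι → T → ℝ} (hf : ∀ i, Continuous (f i))
    (hmix : ∀ p ∈ S, ∀ q ∈ S, ∀ a b : ℝ, 0 ≤ a → 0 ≤ b → a + b = 1 →
      ∃ r ∈ S, ∀ i, f i r = a * f i p + b * f i q)
    {c : ℝ} (h : ∀ p ∈ S, ∃ i, f i p < c) :
    ∃ (s : Finset ι) (w : ι → ℝ), (∀ i ∈ s, 0 ≤ w i) ∧ ∑ i ∈ s, w i = 1 ∧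
      ∀ p ∈ S, ∑ i ∈ s, w i * f i p < c := by
  classical
  obtain ⟨s, hs⟩ := hS.elim_finite_subcover (fun i => {p | f i p < c})
    (fun i => isOpen_lt (hf i) continuous_const)
    (fun p hp => by simpa using h p hp)
  let F : T → (s → ℝ) := fun p i => f i p
  have hF : Continuous F := continuous_pi fun i => hf i
  have hconv : Convex ℝ (F '' S) := by
    rintro _ ⟨p, hp, rfl⟩ _ ⟨q, hq, rfl⟩ a b ha hb hab
    obtain ⟨r, hr, hfr⟩ := hmix p hp q hq a b ha hb hab
    exact ⟨r, hr, funext fun i => by simp [F, hfr]⟩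
  have hBconv : Convex ℝ (Set.Ici (fun _ : s => c)) := convex_Ici _
  have hdisj : Disjoint (F '' S) (Set.Ici (fun _ : s => c)) := by
    rw [Set.disjoint_left]
    rintro _ ⟨p, hp, rfl⟩ hc
    obtain ⟨i, hi, hlt⟩ : ∃ i ∈ s, f i p < c := by simpa using hs hp
    exact absurd (hc ⟨i, hi⟩) (not_le.2 hlt)
  obtain ⟨l, u, v, hlu, huv, hvl⟩ :=
    geometric_hahn_banach_compact_closed hconv (hS.image hF) hBconv isClosed_Ici hdisj
  let e : s → ℝ := fun i => l (Pi.single i 1)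
  have hl : ∀ x : s → ℝ, l x = ∑ i, e i * x i := by
    intro x
    conv_lhs => rw [← Finset.univ_sum_single x]
    rw [map_sum]
    refine Finset.sum_congr rfl fun i _ => ?_
    rw [show Pi.single i (x i) = x i • (Pi.single i 1 : s → ℝ) by
      rw [← Pi.single_smul, smul_eq_mul, mul_one], map_smul, smul_eq_mul, mul_comm]
  have he : ∀ i, 0 ≤ e i := by
    intro i
    by_contra! hi
    set x : s → ℝ := fun _ => c
    have hx := hvl x Set.self_mem_Ici
    have hmem : x + ((l x - v) / (-e i)) • Pi.single i (1 : ℝ) ∈ Set.Ici x := by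
      rw [Set.mem_Ici, le_add_iff_nonneg_right]
      refine smul_nonneg (div_nonneg (by linarith) (by linarith)) ?_
      exact Pi.single_nonneg.2 zero_le_one
    have hlt := hvl _ hmem
    rw [map_add, map_smul, smul_eq_mul] at hlt
    change v < l x + (l x - v) / (-e i) * e i at hlt
    have : (l x - v) / (-e i) * e i = -(l x - v) := by
      have := hi.ne
      field_simp
    linarith
  have hW : 0 < ∑ i, e i := by
    refine lt_of_le_of_ne (Finset.sum_nonneg fun i _ => he i) fun h0 => ?_
    have h0' := (Finset.sum_eq_zero_iff_of_nonneg fun i _ => he i).1 h0.symm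
    have hz : ∀ x, l x = 0 := fun x => by
      rw [hl]
      exact Finset.sum_eq_zero fun i hi => by rw [h0' i hi, zero_mul]
    obtain ⟨p, hp⟩ := hne
    have h1 := hlu _ ⟨p, hp, rfl⟩
    have h2 := hvl _ (Set.self_mem_Ici (a := fun _ : s => c))
    rw [hz] at h1 h2
    linarith
  have hvc : v < (∑ i, e i) * c := by
    have := hvl _ (Set.self_mem_Ici (a := fun _ : s => c))
    rwa [hl, ← Finset.sum_mul] at this
  refine ⟨s, fun i => if hi : i ∈ s then e ⟨i, hi⟩ / ∑ j, e j else 0, ?_, ?_, ?_⟩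
  · intro i hi
    simpa [hi] using div_nonneg (he _) hW.le
  · rw [← Finset.sum_coe_sort]
    simp only [Finset.coe_mem, dite_true, Subtype.coe_eta]
    rw [← Finset.sum_div, div_self hW.ne']
  · intro p hp
    rw [← Finset.sum_coe_sort]
    simp only [Finset.coe_mem, dite_true, Subtype.coe_eta]
    have h1 := hlu _ ⟨p, hp, rfl⟩
    rw [hl] at h1
    simp only [div_mul_eq_mul_div]
    rw [← Finset.sum_div, div_lt_iff₀ hW]
    change ∑ i, e i * f i p < u at h1
    linarith

/-- The set of positive semidefinite real matrices is closed. -/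
theorem isClosed_setOf_posSemidef {n : Type*} [Fintype n] :
    IsClosed {M : Matrix n n ℝ | M.PosSemidef} := by
  simp only [Matrix.posSemidef_iff_dotProduct_mulVec, Set.ofPred_and, Set.ofPred_forall]
  refine (isClosed_eq (by fun_prop) continuous_id).inter (isClosed_iInter fun x => ?_)
  exact isClosed_le continuous_const
    (continuous_const.dotProduct (continuous_id.matrix_mulVec continuous_const))

section ProbabilityMeasure

variable {Ω : Type*} [MeasurableSpace Ω]

/-- Integration of a continuous function is weakly continuous over a compact space. -/
theorem continuous_integral_probabilityMeasure [TopologicalSpace Ω] [OpensMeasurableSpace Ω]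
    [CompactSpace Ω] {g : Ω → ℝ} (hg : Continuous g) :
    Continuous fun P : ProbabilityMeasure Ω => ∫ x, g x ∂(P : Measure Ω) := by
  refine continuous_iff_continuousAt.2 fun P => ?_
  exact ProbabilityMeasure.tendsto_iff_forall_integral_tendsto.1 Filter.tendsto_id
    (BoundedContinuousFunction.mkOfCompact ⟨g, hg⟩)

/-- Two probability measures have a mixture with any prescribed weights. -/
theorem exists_probabilityMeasure_mixture (P Q : ProbabilityMeasure Ω) {a b : ℝ}
    (ha : 0 ≤ a) (hb : 0 ≤ b) (hab : a + b = 1) :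
    ∃ R : ProbabilityMeasure Ω, ∀ g : Ω → ℝ, Integrable g (P : Measure Ω) →
      Integrable g (Q : Measure Ω) →
      ∫ x, g x ∂(R : Measure Ω) = a * ∫ x, g x ∂(P : Measure Ω) + b * ∫ x, g x ∂(Q : Measure Ω) := by
  have hprob : IsProbabilityMeasure
      (ENNReal.ofReal a • (P : Measure Ω) + ENNReal.ofReal b • (Q : Measure Ω)) :=
    ⟨by simp [← ENNReal.ofReal_add ha hb, hab]⟩
  refine ⟨⟨_, hprob⟩, fun g hP hQ => ?_⟩
  rw [ProbabilityMeasure.coe_mk, integral_add_measure (hP.smul_measure ENNReal.ofReal_ne_top)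
    (hQ.smul_measure ENNReal.ofReal_ne_top), integral_smul_measure, integral_smul_measure,
    ENNReal.toReal_ofReal ha, ENNReal.toReal_ofReal hb, smul_eq_mul, smul_eq_mul]

/-- A measurable function with values in the unit interval is integrable. -/
theorem integrable_of_mem_unitInterval (P : Measure Ω) [IsFiniteMeasure P] {φ : Ω → ℝ}
    (hφ : Measurable φ) (h01 : ∀ x, φ x ∈ Set.Icc (0 : ℝ) 1) : Integrable φ P :=
  Integrable.of_mem_Icc 0 1 hφ.aemeasurable (Filter.Eventually.of_forall h01)

theorem bayesError_eq (P0 P1 : ProbabilityMeasure Ω) {φ : Ω → ℝ}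
    (hφ : Measurable φ) (h01 : ∀ x, φ x ∈ Set.Icc (0 : ℝ) 1) :
    bayesError φ (P0 : Measure Ω) (P1 : Measure Ω) =
      1 / 2 * ∫ x, φ x ∂(P0 : Measure Ω) + 1 / 2 * (1 - ∫ x, φ x ∂(P1 : Measure Ω)) := by
  rw [bayesError, integral_sub (integrable_const _) (integrable_of_mem_unitInterval _ hφ h01)]
  simp

theorem bayesError_mem_Icc (P0 P1 : ProbabilityMeasure Ω) {φ : Ω → ℝ}
    (hφ : Measurable φ) (h01 : ∀ x, φ x ∈ Set.Icc (0 : ℝ) 1) :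
    bayesError φ (P0 : Measure Ω) (P1 : Measure Ω) ∈ Set.Icc (0 : ℝ) 1 := by
  have hint (P : ProbabilityMeasure Ω) : ∫ x, φ x ∂(P : Measure Ω) ∈ Set.Icc (0 : ℝ) 1 := by
    refine ⟨integral_nonneg fun x => (h01 x).1, ?_⟩
    simpa using integral_mono (integrable_of_mem_unitInterval (P : Measure Ω) hφ h01)
      (integrable_const 1) fun x => (h01 x).2
  obtain ⟨h0, h0'⟩ := hint P0
  obtain ⟨h1, h1'⟩ := hint P1
  rw [bayesError_eq P0 P1 hφ h01]
  constructor <;> linarith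

/-- The Bayes error of a mixture of tests is the mixture of the Bayes errors. -/
theorem bayesError_sum {ι : Type*} (s : Finset ι) {w : ι → ℝ} (hsum : ∑ i ∈ s, w i = 1)
    {φ : ι → Ω → ℝ} (P0 P1 : ProbabilityMeasure Ω)
    (hφ : ∀ i, Measurable (φ i)) (h01 : ∀ i x, φ i x ∈ Set.Icc (0 : ℝ) 1)
    (hφs : Measurable fun x => ∑ i ∈ s, w i * φ i x)
    (h01s : ∀ x, ∑ i ∈ s, w i * φ i x ∈ Set.Icc (0 : ℝ) 1) :
    bayesError (fun x => ∑ i ∈ s, w i * φ i x) (P0 : Measure Ω) (P1 : Measure Ω) =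
      ∑ i ∈ s, w i * bayesError (φ i) (P0 : Measure Ω) (P1 : Measure Ω) := by
  have hint (P : ProbabilityMeasure Ω) : ∫ x, ∑ i ∈ s, w i * φ i x ∂(P : Measure Ω) =
      ∑ i ∈ s, w i * ∫ x, φ i x ∂(P : Measure Ω) := by
    rw [integral_finsetSum _ fun i _ =>
      (integrable_of_mem_unitInterval (P : Measure Ω) (hφ i) (h01 i)).const_mul (w i)]
    simp only [integral_const_mul]
  rw [bayesError_eq P0 P1 hφs h01s, hint, hint]
  simp only [fun i => bayesError_eq P0 P1 (hφ i) (h01 i)]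
  have hsub : 1 - ∑ i ∈ s, w i * ∫ x, φ i x ∂(P1 : Measure Ω) =
      ∑ i ∈ s, w i * (1 - ∫ x, φ i x ∂(P1 : Measure Ω)) := by
    simp [mul_sub, Finset.sum_sub_distrib, hsum]
  rw [hsub, Finset.mul_sum, Finset.mul_sum, ← Finset.sum_add_distrib]
  exact Finset.sum_congr rfl fun i _ => by ring

/-- Continuous tests do as well as measurable ones against a fixed pair of measures. -/
theorem exists_continuous_bayesError_lt [PseudoMetricSpace Ω] [BorelSpace Ω]
    (P0 P1 : ProbabilityMeasure Ω) {φ : Ω → ℝ} (hφ : Measurable φ)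
    (h01 : ∀ x, φ x ∈ Set.Icc (0 : ℝ) 1) {c : ℝ}
    (hc : bayesError φ (P0 : Measure Ω) (P1 : Measure Ω) < c) :
    ∃ ψ : Ω → ℝ, Continuous ψ ∧ (∀ x, ψ x ∈ Set.Icc (0 : ℝ) 1) ∧
      bayesError ψ (P0 : Measure Ω) (P1 : Measure Ω) < c := by
  have hφi (P : Measure Ω) [IsFiniteMeasure P] := integrable_of_mem_unitInterval P hφ h01
  obtain ⟨g, hg, hgi⟩ := (hφi ((P0 : Measure Ω) + (P1 : Measure Ω)))
    |>.exists_boundedContinuous_integral_sub_le (sub_pos.2 hc)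
  have hψ : Continuous fun x => max 0 (min 1 (g x)) := by fun_prop
  have hψ01 : ∀ x, max 0 (min 1 (g x)) ∈ Set.Icc (0 : ℝ) 1 := fun x =>
    ⟨le_max_left _ _, max_le zero_le_one (min_le_left _ _)⟩
  refine ⟨_, hψ, hψ01, ?_⟩
  have hψi (P : Measure Ω) [IsFiniteMeasure P] :=
    integrable_of_mem_unitInterval P hψ.measurable hψ01
  have hgi' : Integrable (fun x => ‖φ x - g x‖) ((P0 : Measure Ω) + (P1 : Measure Ω)) :=
    ((hφi _).sub hgi).norm
  rw [integral_add_measure hgi'.left_of_add_measure hgi'.right_of_add_measure] at hg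
  have hclip (x : Ω) : |φ x - max 0 (min 1 (g x))| ≤ ‖φ x - g x‖ := by
    obtain ⟨h0, h1⟩ := h01 x
    rw [Real.norm_eq_abs]
    rcases max_cases 0 (min 1 (g x)) with ⟨h, h'⟩ | ⟨h, h'⟩ <;>
    rcases min_cases 1 (g x) with ⟨k, k'⟩ | ⟨k, k'⟩ <;>
    rw [h] <;> try rw [k]
    all_goals
      refine abs_le.2 ⟨?_, ?_⟩ <;>
      cases abs_cases (φ x - g x) <;> linarith
  have h0 : ∫ x, max 0 (min 1 (g x)) ∂(P0 : Measure Ω) ≤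
      ∫ x, φ x ∂(P0 : Measure Ω) + ∫ x, ‖φ x - g x‖ ∂(P0 : Measure Ω) := by
    rw [← integral_add (hφi _) hgi'.left_of_add_measure]
    refine integral_mono (hψi _) ((hφi _).add hgi'.left_of_add_measure) fun x => ?_
    have := (abs_le.1 (hclip x)).1
    linarith
  have h1 : ∫ x, φ x ∂(P1 : Measure Ω) ≤
      ∫ x, max 0 (min 1 (g x)) ∂(P1 : Measure Ω) + ∫ x, ‖φ x - g x‖ ∂(P1 : Measure Ω) := by
    rw [← integral_add (hψi _) hgi'.right_of_add_measure]
    refine integral_mono (hφi _) ((hψi _).add hgi'.right_of_add_measure) fun x => ?_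
    have := (abs_le.1 (hclip x)).2
    linarith
  rw [bayesError_eq P0 P1 hφ h01] at hc hg
  rw [bayesError_eq P0 P1 hψ.measurable hψ01]
  linarith

end ProbabilityMeasure

section MomentSet

variable {d : ℕ} {X : Set (EuclideanSpace ℝ (Fin d))} {K : ℕ} {dk : Fin K → ℕ}
  {Ψ : ∀ k, X → Matrix (Fin (dk k)) (Fin (dk k)) ℝ}

theorem isClosed_matrixMomentSet [CompactSpace X] (hΨ : ∀ k, Continuous (Ψ k))
    (Q : ProbabilityMeasure X) (η : ℝ) : IsClosed (matrixMomentSet X Ψ Q η) := by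
  have hcont (k : Fin K) :
      Continuous fun P : ProbabilityMeasure X => matExp (Ψ k) (P : Measure X) :=
    continuous_matrix fun i j =>
      continuous_integral_probabilityMeasure ((hΨ k).matrix_elem i j)
  simp only [matrixMomentSet, Set.ofPred_forall, Set.ofPred_and]
  refine isClosed_iInter fun k => IsClosed.inter ?_ ?_
  · exact isClosed_setOf_posSemidef.preimage
      (((hcont k).sub continuous_const).add continuous_const)
  · exact isClosed_setOf_posSemidef.preimage
      (continuous_const.sub ((hcont k).sub continuous_const))

/-- A moment set contains the mixtures of its members. -/
theorem exists_mixture_mem_matrixMomentSet [CompactSpace X] (hΨ : ∀ k, Continuous (Ψ k))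
    {Q : ProbabilityMeasure X} {η : ℝ} {P P' : ProbabilityMeasure X}
    (hP : P ∈ matrixMomentSet X Ψ Q η) (hP' : P' ∈ matrixMomentSet X Ψ Q η) {a b : ℝ}
    (ha : 0 ≤ a) (hb : 0 ≤ b) (hab : a + b = 1) :
    ∃ R ∈ matrixMomentSet X Ψ Q η, ∀ g : X → ℝ, Continuous g →
      ∫ x, g x ∂(R : Measure X) =
        a * ∫ x, g x ∂(P : Measure X) + b * ∫ x, g x ∂(P' : Measure X) := by
  obtain ⟨R, hR⟩ := exists_probabilityMeasure_mixture P P' ha hb hab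
  have hRc (g : X → ℝ) (hg : Continuous g) :=
    hR g (hg.integrable_of_hasCompactSupport (HasCompactSupport.of_compactSpace g))
      (hg.integrable_of_hasCompactSupport (HasCompactSupport.of_compactSpace g))
  refine ⟨R, fun k => ?_, hRc⟩
  have hmat : matExp (Ψ k) (R : Measure X) =
      a • matExp (Ψ k) (P : Measure X) + b • matExp (Ψ k) (P' : Measure X) := by
    ext i j
    simpa [matExp] using hRc _ ((hΨ k).matrix_elem i j)
  obtain rfl : b = 1 - a := by linarith
  rw [hmat]
  constructor
  · convert ((hP k).1.smul ha).add ((hP' k).1.smul hb) using 1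
    module
  · convert ((hP k).2.smul ha).add ((hP' k).2.smul hb) using 1
    module

end MomentSet

/-- Minimax equals maximin for the robust Bayesian testing problem
with matrix-valued moment uncertainty sets. -/
theorem matrix_minimax_eq_maximin
    {d : ℕ} (X : Set (EuclideanSpace ℝ (Fin d))) (hX : IsCompact X)
    {K : ℕ} (dk : Fin K → ℕ)
    (Ψ : ∀ k, X → Matrix (Fin (dk k)) (Fin (dk k)) ℝ)
    (hΨcont : ∀ k, Continuous (Ψ k))
    (hΨsymm : ∀ k, ∀ x : X, (Ψ k x).IsSymm)
    (Q0 Q1 : ProbabilityMeasure X) (η : ℝ) (hη : 0 < η)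
    (hne0 : (matrixMomentSet X Ψ Q0 η).Nonempty)
    (hne1 : (matrixMomentSet X Ψ Q1 η).Nonempty) :
    sInf {r : ℝ | ∃ φ : X → ℝ, Measurable φ ∧ (∀ x, φ x ∈ Set.Icc (0 : ℝ) 1) ∧
        r = sSup {e : ℝ | ∃ P0 ∈ matrixMomentSet X Ψ Q0 η,
          ∃ P1 ∈ matrixMomentSet X Ψ Q1 η,
          e = bayesError φ (P0 : Measure X) (P1 : Measure X)}} =
      sSup {r : ℝ | ∃ P0 ∈ matrixMomentSet X Ψ Q0 η,
        ∃ P1 ∈ matrixMomentSet X Ψ Q1 η,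
        r = sInf {e : ℝ | ∃ φ : X → ℝ, Measurable φ ∧ (∀ x, φ x ∈ Set.Icc (0 : ℝ) 1) ∧
          e = bayesError φ (P0 : Measure X) (P1 : Measure X)}} := by
  have : CompactSpace X := isCompact_iff_compactSpace.1 hX
  obtain ⟨R0, hR0⟩ := hne0
  obtain ⟨R1, hR1⟩ := hne1
  have hbddAbove (φ : X → ℝ) (hφ : Measurable φ) (h01 : ∀ x, φ x ∈ Set.Icc (0 : ℝ) 1) :
      BddAbove {e : ℝ | ∃ P0 ∈ matrixMomentSet X Ψ Q0 η, ∃ P1 ∈ matrixMomentSet X Ψ Q1 η,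
        e = bayesError φ (P0 : Measure X) (P1 : Measure X)} :=
    ⟨1, by rintro _ ⟨P0, -, P1, -, rfl⟩; exact (bayesError_mem_Icc P0 P1 hφ h01).2⟩
  have hbddBelow (P0 P1 : ProbabilityMeasure X) :
      BddBelow {e : ℝ | ∃ φ : X → ℝ, Measurable φ ∧ (∀ x, φ x ∈ Set.Icc (0 : ℝ) 1) ∧
        e = bayesError φ (P0 : Measure X) (P1 : Measure X)} :=
    ⟨0, by rintro _ ⟨φ, hφ, h01, rfl⟩; exact (bayesError_mem_Icc P0 P1 hφ h01).1⟩
  have hzero : ∀ x : X, (fun _ => 0 : X → ℝ) x ∈ Set.Icc (0 : ℝ) 1 := fun _ => by simp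
  have hzm : Measurable (fun _ => 0 : X → ℝ) := measurable_const
  have hnonempty (P0 P1 : ProbabilityMeasure X) :
      {e : ℝ | ∃ φ : X → ℝ, Measurable φ ∧ (∀ x, φ x ∈ Set.Icc (0 : ℝ) 1) ∧
        e = bayesError φ (P0 : Measure X) (P1 : Measure X)}.Nonempty :=
    ⟨_, _, hzm, hzero, rfl⟩
  have hbdd : BddAbove {r : ℝ | ∃ P0 ∈ matrixMomentSet X Ψ Q0 η,
      ∃ P1 ∈ matrixMomentSet X Ψ Q1 η,
      r = sInf {e : ℝ | ∃ φ : X → ℝ, Measurable φ ∧ (∀ x, φ x ∈ Set.Icc (0 : ℝ) 1) ∧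
        e = bayesError φ (P0 : Measure X) (P1 : Measure X)}} := by
    refine ⟨1, ?_⟩
    rintro _ ⟨P0, -, P1, -, rfl⟩
    exact (csInf_le (hbddBelow P0 P1) ⟨_, hzm, hzero, rfl⟩).trans
      (bayesError_mem_Icc P0 P1 hzm hzero).2
  apply le_antisymm
  · refine le_of_forall_gt_imp_ge_of_dense fun c hc => ?_
    let Φ := {φ : X → ℝ // Continuous φ ∧ ∀ x, φ x ∈ Set.Icc (0 : ℝ) 1}
    let f : Φ → ProbabilityMeasure X × ProbabilityMeasure X → ℝ := fun φ P =>
      bayesError φ.1 (P.1 : Measure X) (P.2 : Measure X)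
    have hf_eq (φ : Φ) (P) : f φ P = _ := bayesError_eq P.1 P.2 φ.2.1.measurable φ.2.2
    have hcomp : IsCompact (matrixMomentSet X Ψ Q0 η ×ˢ matrixMomentSet X Ψ Q1 η) :=
      (isClosed_matrixMomentSet hΨcont Q0 η).isCompact.prod
        (isClosed_matrixMomentSet hΨcont Q1 η).isCompact
    have hcont : ∀ φ, Continuous (f φ) := by
      intro φ
      simp only [funext (hf_eq φ)]
      have hint := continuous_integral_probabilityMeasure φ.2.1
      exact (continuous_const.mul (hint.comp continuous_fst)).add
        (continuous_const.mul (continuous_const.sub (hint.comp continuous_snd)))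
    have hmix : ∀ p ∈ matrixMomentSet X Ψ Q0 η ×ˢ matrixMomentSet X Ψ Q1 η,
        ∀ q ∈ matrixMomentSet X Ψ Q0 η ×ˢ matrixMomentSet X Ψ Q1 η,
        ∀ a b : ℝ, 0 ≤ a → 0 ≤ b → a + b = 1 →
        ∃ r ∈ matrixMomentSet X Ψ Q0 η ×ˢ matrixMomentSet X Ψ Q1 η,
          ∀ φ, f φ r = a * f φ p + b * f φ q := by
      intro p hp q hq a b ha hb hab
      obtain ⟨P0, hP0, hint0⟩ :=
        exists_mixture_mem_matrixMomentSet hΨcont hp.1 hq.1 ha hb hab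
      obtain ⟨P1, hP1, hint1⟩ :=
        exists_mixture_mem_matrixMomentSet hΨcont hp.2 hq.2 ha hb hab
      refine ⟨(P0, P1), ⟨hP0, hP1⟩, fun φ => ?_⟩
      rw [hf_eq, hf_eq, hf_eq, hint0 _ φ.2.1, hint1 _ φ.2.1]
      linear_combination -(1 / 2) * hab
    have hbeat : ∀ P ∈ matrixMomentSet X Ψ Q0 η ×ˢ matrixMomentSet X Ψ Q1 η,
        ∃ φ, f φ P < c := by
      intro P hP
      have hPlt := lt_of_le_of_lt (le_csSup hbdd ⟨P.1, hP.1, P.2, hP.2, rfl⟩) hc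
      obtain ⟨_, ⟨φ, hφ, h01, rfl⟩, hφc⟩ := exists_lt_of_csInf_lt (hnonempty P.1 P.2) hPlt
      obtain ⟨ψ, hψ, hψ01, hψc⟩ := exists_continuous_bayesError_lt P.1 P.2 hφ h01 hφc
      exact ⟨⟨ψ, hψ, hψ01⟩, hψc⟩
    obtain ⟨s, w, hw, hsum, hlt⟩ :=
      exists_finite_mixture_lt hcomp ⟨(R0, R1), hR0, hR1⟩ hcont hmix hbeat
    have hm : Measurable fun x => ∑ φ ∈ s, w φ * φ.1 x :=
      Finset.measurable_fun_sum s fun φ _ => φ.2.1.measurable.const_mul _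
    have h01 : ∀ x, ∑ φ ∈ s, w φ * φ.1 x ∈ Set.Icc (0 : ℝ) 1 := fun x =>
      (convex_Icc (0 : ℝ) 1).sum_mem hw hsum fun φ _ => φ.2.2 x
    refine le_trans (csInf_le ⟨0, ?_⟩ ⟨_, hm, h01, rfl⟩)
      (csSup_le ⟨_, R0, hR0, R1, hR1, rfl⟩ ?_)
    · rintro _ ⟨φ, hφ, hφ01, rfl⟩
      exact (bayesError_mem_Icc R0 R1 hφ hφ01).1.trans
        (le_csSup (hbddAbove φ hφ hφ01) ⟨R0, hR0, R1, hR1, rfl⟩)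
    · rintro _ ⟨P0, hP0, P1, hP1, rfl⟩
      rw [bayesError_sum s hsum P0 P1 (fun φ => φ.2.1.measurable) (fun φ => φ.2.2) hm h01]
      exact (hlt (P0, P1) ⟨hP0, hP1⟩).le
  · refine csSup_le ⟨_, R0, hR0, R1, hR1, rfl⟩ ?_
    rintro _ ⟨P0, hP0, P1, hP1, rfl⟩
    refine le_csInf ⟨_, fun _ => 0, hzm, hzero, rfl⟩ ?_
    rintro _ ⟨φ, hφ, h01, rfl⟩
    exact (csInf_le (hbddBelow P0 P1) ⟨φ, hφ, h01, rfl⟩).trans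
      (le_csSup (hbddAbove φ hφ h01) ⟨P0, hP0, P1, hP1, rfl⟩)
end
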